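/- Let C be a binary completely regular code of length 16 with minimum distance 6. Then the number of ordered pairs (α,β) ∈ C × C with d(α,β) = i equals 256 for i = 0, 112·256 for i = 6, 30·256 for i = 8, 112·256 for i = 10, 256 for i = 16, and is 0 for all other values of i; that is, C has distance distribution a(C) = (1,0,0,0,0,0,112,0,30,0,112,0,0,0,0,0,1). In particular the Hamming distance between any two codewords of C lies in {0, 6, 8, 10, 16}. -/

import Mathlib

open Set

/-- Distance from a vertex to a code in the binary Hamming space. -/
noncomputable def distToCode {m : ℕ} (C : Set (Fin m → ZMod 2)) (x : Fin m → ZMod 2) : ℕ :=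
  sInf {d | ∃ c ∈ C, hammingDist x c = d}

/-- `C` has minimum distance `δ`. -/
def IsMinDist {m : ℕ} (C : Set (Fin m → ZMod 2)) (δ : ℕ) : Prop :=
  (∀ x ∈ C, ∀ y ∈ C, x ≠ y → δ ≤ hammingDist x y) ∧
  ∃ x ∈ C, ∃ y ∈ C, x ≠ y ∧ hammingDist x y = δ

/-- `C` is completely regular: the number of codewords at distance `k` from `γ`
depends only on `distToCode C γ` and `k`. -/
def IsCompletelyRegular {m : ℕ} (C : Set (Fin m → ZMod 2)) : Prop :=
  ∀ γ γ' : Fin m → ZMod 2, distToCode C γ = distToCode C γ' →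
    ∀ k : ℕ, {c ∈ C | hammingDist γ c = k}.ncard = {c ∈ C | hammingDist γ' c = k}.ncard

/-- Flip coordinate `j` of `x`. -/
def nbr (x : Fin 16 → ZMod 2) (j : Fin 16) : Fin 16 → ZMod 2 :=
  Function.update x j (x j + 1)

lemma nbr_nbr (x : Fin 16 → ZMod 2) (j : Fin 16) : nbr (nbr x j) j = x := by
  have h : ∀ a : ZMod 2, a + 1 + 1 = a := by decide
  simp [nbr, h]

lemma nbr_comm (x : Fin 16 → ZMod 2) (j l : Fin 16) (hjl : j ≠ l) :
    nbr (nbr x j) l = nbr (nbr x l) j := by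
  unfold nbr
  rw [Function.update_of_ne hjl.symm, Function.update_of_ne hjl, Function.update_comm hjl]

lemma dist_nbr_of_ne (x c : Fin 16 → ZMod 2) (j : Fin 16) (h : x j ≠ c j) :
    hammingDist (nbr x j) c + 1 = hammingDist x c := by
  classical
  have h2 : ∀ a b : ZMod 2, a ≠ b → a + 1 = b := by decide
  have : (Finset.univ.filter fun i => x i ≠ c i) =
      insert j (Finset.univ.filter fun i => nbr x j i ≠ c i) := by
    ext i
    by_cases hi : i = j
    · subst hi; simp [h]
    · have hn : nbr x j i = x i := by simp [nbr, hi]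
      simp [hi, hn]
  unfold hammingDist
  rw [this, Finset.card_insert_of_notMem]
  simp [nbr, h2 _ _ h]

lemma dist_nbr_of_eq (x c : Fin 16 → ZMod 2) (j : Fin 16) (h : x j = c j) :
    hammingDist (nbr x j) c = hammingDist x c + 1 := by
  have := dist_nbr_of_ne (nbr x j) c j (by simp [nbr, h])
  rw [nbr_nbr] at this
  exact this.symm

lemma card_ne (x c : Fin 16 → ZMod 2) :
    (Finset.univ.filter fun j => x j ≠ c j).card = hammingDist x c := rfl

lemma card_eq_add (x c : Fin 16 → ZMod 2) :
    (Finset.univ.filter fun j => x j = c j).card + hammingDist x c = 16 := by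
  have := Finset.card_filter_add_card_filter_not (s := (Finset.univ : Finset (Fin 16)))
    (fun j => x j = c j)
  simpa [← card_ne] using this

lemma card_nbr_succ (x c : Fin 16 → ZMod 2) (k : ℕ) :
    (Finset.univ.filter fun j => hammingDist (nbr x j) c = k + 1).card =
      (if hammingDist x c = k + 2 then k + 2 else 0) +
      (if hammingDist x c = k then 16 - k else 0) := by
  have h1 := dist_nbr_of_ne x c
  have h2 := dist_nbr_of_eq x c
  have h3 := card_eq_add x c
  by_cases ha : hammingDist x c = k + 2
  · have : (Finset.univ.filter fun j => hammingDist (nbr x j) c = k + 1) =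
        (Finset.univ.filter fun j => x j ≠ c j) := by
      ext j
      simp only [Finset.mem_filter, Finset.mem_univ, true_and]
      constructor
      · intro h hh; have := h2 j hh; omega
      · intro h; have := h1 j h; omega
    rw [this, card_ne, if_pos ha, if_neg (by omega)]; omega
  · by_cases hb : hammingDist x c = k
    · have : (Finset.univ.filter fun j => hammingDist (nbr x j) c = k + 1) =
          (Finset.univ.filter fun j => x j = c j) := by
        ext j
        simp only [Finset.mem_filter, Finset.mem_univ, true_and]
        constructor
        · intro h; by_contra hh; have := h1 j hh; omega
        · intro h; have := h2 j h; omega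
      rw [this, if_neg ha, if_pos hb]; omega
    · rw [if_neg ha, if_neg hb, Finset.card_eq_zero, Finset.filter_eq_empty_iff]
      intro j _ h
      by_cases hh : x j = c j
      · have := h2 j hh; omega
      · have := h1 j hh; omega

open Classical in
/-- Number of codewords at distance `k` from `x`. -/
noncomputable def cnt (C : Set (Fin 16 → ZMod 2)) (x : Fin 16 → ZMod 2) (k : ℕ) : ℕ :=
  (Finset.univ.filter fun c => c ∈ C ∧ hammingDist x c = k).card

lemma cnt_eq_ncard (C : Set (Fin 16 → ZMod 2)) (x : Fin 16 → ZMod 2) (k : ℕ) :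
    cnt C x k = {c ∈ C | hammingDist x c = k}.ncard := by
  classical
  unfold cnt
  rw [← Set.ncard_coe_finset]
  congr 1
  ext c; simp

lemma cnt_rec (C : Set (Fin 16 → ZMod 2)) (x : Fin 16 → ZMod 2) (k : ℕ) :
    ∑ j, cnt C (nbr x j) (k + 1) = (k + 2) * cnt C x (k + 2) + (16 - k) * cnt C x k := by
  classical
  have h1 : ∀ y l, cnt C y l =
      ∑ c ∈ Finset.univ.filter (fun c => c ∈ C), if hammingDist y c = l then 1 else 0 := by
    intro y l
    rw [← Finset.card_filter, Finset.filter_filter]; rfl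
  simp_rw [h1]
  rw [Finset.sum_comm, Finset.mul_sum, Finset.mul_sum, ← Finset.sum_add_distrib]
  refine Finset.sum_congr rfl fun c _ => ?_
  rw [← Finset.card_filter, card_nbr_succ]
  simp

lemma cnt_pos {C : Set (Fin 16 → ZMod 2)} {x : Fin 16 → ZMod 2} {k : ℕ} :
    0 < cnt C x k ↔ ∃ c ∈ C, hammingDist x c = k := by
  classical
  unfold cnt
  rw [Finset.card_pos]
  constructor
  · rintro ⟨c, hc⟩; simp at hc; exact ⟨c, hc⟩
  · rintro ⟨c, hc⟩; exact ⟨c, by simpa using hc⟩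

lemma dtc_mem {C : Set (Fin 16 → ZMod 2)} (hC : C.Nonempty) (x : Fin 16 → ZMod 2) :
    ∃ c ∈ C, hammingDist x c = distToCode C x := by
  obtain ⟨c, hc⟩ := hC
  have : {d | ∃ c ∈ C, hammingDist x c = d}.Nonempty := ⟨_, c, hc, rfl⟩
  exact Nat.sInf_mem this

lemma dtc_le {C : Set (Fin 16 → ZMod 2)} (x : Fin 16 → ZMod 2) {c} (hc : c ∈ C) :
    distToCode C x ≤ hammingDist x c :=
  Nat.sInf_le ⟨c, hc, rfl⟩

lemma dtc_nbr_le {C : Set (Fin 16 → ZMod 2)} (hC : C.Nonempty) (x : Fin 16 → ZMod 2) (j) :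
    distToCode C (nbr x j) ≤ distToCode C x + 1 := by
  obtain ⟨c, hc, h⟩ := dtc_mem hC x
  have h1 := dtc_le (nbr x j) hc
  by_cases hh : x j = c j
  · have := dist_nbr_of_eq x c j hh; omega
  · have := dist_nbr_of_ne x c j hh; omega

lemma dtc_le_nbr {C : Set (Fin 16 → ZMod 2)} (hC : C.Nonempty) (x : Fin 16 → ZMod 2) (j) :
    distToCode C x ≤ distToCode C (nbr x j) + 1 := by
  have := dtc_nbr_le hC (nbr x j) j
  rwa [nbr_nbr] at this

/-- Number of neighbours of `x` at distance `i` from the code. -/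
noncomputable def cc (C : Set (Fin 16 → ZMod 2)) (x : Fin 16 → ZMod 2) (i : ℕ) : ℕ :=
  (Finset.univ.filter fun j => distToCode C (nbr x j) = i).card

lemma cc_pos {C : Set (Fin 16 → ZMod 2)} {x : Fin 16 → ZMod 2} {i : ℕ} (h : 0 < cc C x i) :
    ∃ y, distToCode C y = i := by
  unfold cc at h
  obtain ⟨j, hj⟩ := Finset.card_pos.1 h
  exact ⟨nbr x j, by simpa using hj⟩

lemma exists_nbr_pred {C : Set (Fin 16 → ZMod 2)} (hC : C.Nonempty) {x : Fin 16 → ZMod 2} {i : ℕ}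
    (h : distToCode C x = i + 1) : ∃ j, distToCode C (nbr x j) = i := by
  obtain ⟨c, hc, hd⟩ := dtc_mem hC x
  have : x ≠ c := by rintro rfl; simp at hd; omega
  obtain ⟨j, hj⟩ := Function.ne_iff.1 this
  refine ⟨j, ?_⟩
  have h1 := dist_nbr_of_ne x c j hj
  have h2 := dtc_le (nbr x j) hc
  have h3 := dtc_le_nbr hC x j
  omega

lemma cc_mono {C : Set (Fin 16 → ZMod 2)} (hC : C.Nonempty) {z : Fin 16 → ZMod 2} {i : ℕ}
    (h : distToCode C z = i + 2) :
    ∃ y, distToCode C y = i + 1 ∧ cc C y i + 1 ≤ cc C z (i + 1) := by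
  classical
  obtain ⟨p, hp⟩ := exists_nbr_pred hC h
  refine ⟨nbr z p, hp, ?_⟩
  unfold cc
  rw [← Finset.card_insert_of_notMem (a := p)]
  · apply Finset.card_le_card
    intro q hq
    simp only [Finset.mem_insert, Finset.mem_filter, Finset.mem_univ, true_and] at hq ⊢
    by_cases hqp : q = p
    · rw [hqp, hp]
    · have hq := hq.resolve_left hqp
      rw [nbr_comm _ _ _ (Ne.symm hqp)] at hq
      have h1 := dtc_le_nbr hC z q
      have h2 := dtc_le_nbr hC (nbr z q) p
      omega
  · simp [nbr_nbr, h]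

lemma cc_sum {C : Set (Fin 16 → ZMod 2)} (hC : C.Nonempty) {x : Fin 16 → ZMod 2} {i : ℕ}
    (h : distToCode C x = i + 1) (g : ℕ → ℕ) :
    ∑ j, g (distToCode C (nbr x j)) =
      cc C x i * g i + cc C x (i + 1) * g (i + 1) + cc C x (i + 2) * g (i + 2) := by
  unfold cc
  simp_rw [Finset.card_filter, Finset.sum_mul, ← Finset.sum_add_distrib]
  refine Finset.sum_congr rfl fun j _ => ?_
  have h1 := dtc_nbr_le hC x j
  have h2 := dtc_le_nbr hC x j
  have : distToCode C (nbr x j) = i ∨ distToCode C (nbr x j) = i + 1 ∨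
    distToCode C (nbr x j) = i + 2 := by omega
  rcases this with h | h | h <;> simp [h]

open Classical in
/-- Outer distribution numbers. -/
noncomputable def bt (C : Set (Fin 16 → ZMod 2)) (i k : ℕ) : ℕ :=
  if h : ∃ x, distToCode C x = i then cnt C h.choose k else 0

lemma cnt_eq_bt {C : Set (Fin 16 → ZMod 2)} (hreg : IsCompletelyRegular C)
    {x : Fin 16 → ZMod 2} {i : ℕ} (h : distToCode C x = i) (k : ℕ) : cnt C x k = bt C i k := by
  have hh : ∃ x, distToCode C x = i := ⟨x, h⟩
  unfold bt
  rw [dif_pos hh, cnt_eq_ncard, cnt_eq_ncard]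
  exact hreg _ _ (h.trans hh.choose_spec.symm) k

lemma bt_zero_of_lt {C : Set (Fin 16 → ZMod 2)} {i k : ℕ} (h : k < i) : bt C i k = 0 := by
  unfold bt
  split_ifs with hh
  · by_contra h0
    obtain ⟨c, hc, hd⟩ := cnt_pos.1 (Nat.pos_of_ne_zero h0)
    have := dtc_le hh.choose hc
    have := hh.choose_spec
    omega
  · rfl

lemma bt_zero_of_add {C : Set (Fin 16 → ZMod 2)} (hC : C.Nonempty) (hd : IsMinDist C 6)
    {i k : ℕ} (h : i + k < 6) (hik : k ≠ i) : bt C i k = 0 := by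
  unfold bt
  split_ifs with hh
  · by_contra h0
    obtain ⟨c, hc, hdc⟩ := cnt_pos.1 (Nat.pos_of_ne_zero h0)
    obtain ⟨c', hc', hdc'⟩ := dtc_mem hC hh.choose
    rw [hh.choose_spec] at hdc'
    have hne : c ≠ c' := by rintro rfl; omega
    have h1 := hd.1 c hc c' hc' hne
    have h2 := hammingDist_triangle_left c c' hh.choose
    omega
  · rfl

lemma bt_diag_pos {C : Set (Fin 16 → ZMod 2)} (hC : C.Nonempty)
    {i : ℕ} (hx : ∃ x, distToCode C x = i) : 0 < bt C i i := by
  unfold bt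
  rw [dif_pos hx, cnt_pos]
  obtain ⟨c, hc, h⟩ := dtc_mem hC hx.choose
  exact ⟨c, hc, h.trans hx.choose_spec⟩

lemma bt_diag_one {C : Set (Fin 16 → ZMod 2)} (hC : C.Nonempty) (hd : IsMinDist C 6)
    {i : ℕ} (hi : i ≤ 2) (hx : ∃ x, distToCode C x = i) : bt C i i = 1 := by
  classical
  apply le_antisymm _ (bt_diag_pos hC hx)
  unfold bt
  rw [dif_pos hx]
  unfold cnt
  rw [Finset.card_le_one]
  intro c hc c' hc'
  simp only [Finset.mem_filter, Finset.mem_univ, true_and] at hc hc'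
  by_contra hne
  have h1 := hd.1 c hc.1 c' hc'.1 hne
  have h2 := hammingDist_triangle_left c c' hx.choose
  omega

lemma row {C : Set (Fin 16 → ZMod 2)} (hC : C.Nonempty) (hreg : IsCompletelyRegular C)
    {x : Fin 16 → ZMod 2} {i : ℕ} (h : distToCode C x = i + 1) :
    cc C x i + cc C x (i + 1) + cc C x (i + 2) = 16 ∧
    ∀ k, cc C x i * bt C i (k + 1) + cc C x (i + 1) * bt C (i + 1) (k + 1)
      + cc C x (i + 2) * bt C (i + 2) (k + 1)
      = (k + 2) * bt C (i + 1) (k + 2) + (16 - k) * bt C (i + 1) k := by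
  constructor
  · have := cc_sum hC h (fun _ => 1)
    simpa using this.symm
  · intro k
    rw [← cc_sum hC h (fun l => bt C l (k + 1)), ← cnt_eq_bt hreg h, ← cnt_eq_bt hreg h, ← cnt_rec]
    exact Finset.sum_congr rfl fun j _ => (cnt_eq_bt hreg rfl _).symm

lemma dtc_code {C : Set (Fin 16 → ZMod 2)} {x : Fin 16 → ZMod 2} (hx : x ∈ C) :
    distToCode C x = 0 := by
  have := dtc_le x hx
  simpa using this

lemma mem_of_dtc {C : Set (Fin 16 → ZMod 2)} (hC : C.Nonempty) {x : Fin 16 → ZMod 2}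
    (h : distToCode C x = 0) : x ∈ C := by
  obtain ⟨c, hc, hd⟩ := dtc_mem hC x
  rw [h, hammingDist_eq_zero] at hd
  rwa [hd]

lemma row0 {C : Set (Fin 16 → ZMod 2)} (hC : C.Nonempty) (hreg : IsCompletelyRegular C)
    (hd : IsMinDist C 6) :
    (∃ y, distToCode C y = 1) ∧
    ∀ k, 16 * bt C 1 (k + 1) = (k + 2) * bt C 0 (k + 2) + (16 - k) * bt C 0 k := by
  obtain ⟨x, hx⟩ := hC
  have h0 := dtc_code hx
  have h1 : ∀ j, distToCode C (nbr x j) = 1 := by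
    intro j
    have h2 := dtc_nbr_le ⟨x, hx⟩ x j
    have h3 : distToCode C (nbr x j) ≠ 0 := by
      intro h
      have h4 := mem_of_dtc ⟨x, hx⟩ h
      have h5 := dist_nbr_of_eq x x j rfl
      have h6 := hd.1 _ h4 x hx (by intro h; rw [h] at h5; simp at h5)
      simp at h5; omega
    omega
  refine ⟨⟨_, h1 0⟩, fun k => ?_⟩
  rw [← cnt_eq_bt hreg h0, ← cnt_eq_bt hreg h0, ← cnt_rec]
  simp_rw [fun j => cnt_eq_bt hreg (h1 j)]
  simp

set_option maxHeartbeats 1000000 in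
/-- The arithmetic core: the parameters are forced up to level 4. -/
lemma core {C : Set (Fin 16 → ZMod 2)} (hC : C.Nonempty) (hreg : IsCompletelyRegular C)
    (hd : IsMinDist C 6) :
    (∀ k, bt C 0 (k + 1) + 15 * bt C 2 (k + 1) = (k + 2) * bt C 1 (k + 2) + (16 - k) * bt C 1 k) ∧
    (∀ k, 2 * bt C 1 (k + 1) + 14 * bt C 3 (k + 1)
      = (k + 2) * bt C 2 (k + 2) + (16 - k) * bt C 2 k) ∧
    (∀ k, 15 * bt C 2 (k + 1) + bt C 4 (k + 1)
      = (k + 2) * bt C 3 (k + 2) + (16 - k) * bt C 3 k) ∧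
    (∀ k, 16 * bt C 3 (k + 1) = (k + 2) * bt C 4 (k + 2) + (16 - k) * bt C 4 k) := by
  have hx0 : ∃ x, distToCode C x = 0 := hC.imp fun x hx => dtc_code hx
  obtain ⟨⟨x1, hx1⟩, r0⟩ := row0 hC hreg hd
  have z : ∀ i k, i + k < 6 → k ≠ i → bt C i k = 0 := fun i k h h' => bt_zero_of_add hC hd h h'
  have zl : ∀ i k, k < i → bt C i k = 0 := fun i k h => bt_zero_of_lt h
  have d0 := bt_diag_one hC hd (by norm_num) hx0
  have d1 := bt_diag_one hC hd (by norm_num) ⟨x1, hx1⟩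
  have e06 : 0 < bt C 0 6 := by
    obtain ⟨x, hx, y, hy, -, hxy⟩ := hd.2
    rw [← cnt_eq_bt hreg (dtc_code hx), cnt_pos]
    exact ⟨y, hy, hxy⟩
  -- level 1
  obtain ⟨s1, r1⟩ := row hC hreg hx1
  have q1 := r1 0
  have q0 : cc C x1 0 = 1 := by
    obtain ⟨c, hc, hdc⟩ := dtc_mem hC x1
    rw [hx1] at hdc
    unfold cc
    rw [Finset.card_eq_one]
    obtain ⟨j, hj⟩ := exists_nbr_pred hC hx1
    refine ⟨j, ?_⟩
    ext l
    simp only [Finset.mem_filter, Finset.mem_univ, true_and, Finset.mem_singleton]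
    constructor
    · intro hl
      by_contra hne
      have m1 := mem_of_dtc hC hj
      have m2 := mem_of_dtc hC hl
      have h3 := hammingDist_triangle_left (nbr x1 j) (nbr x1 l) x1
      have h4 := dist_nbr_of_eq x1 x1 j rfl
      have h5 := dist_nbr_of_eq x1 x1 l rfl
      rw [hammingDist_comm] at h4 h5
      simp at h4 h5
      have h6 : nbr x1 j ≠ nbr x1 l := by
        intro h
        have := congrFun h l
        simp [nbr, hne] at this
      have := hd.1 _ m1 _ m2 h6
      omega
    · rintro rfl; exact hj
  norm_num at q1 s1
  rw [z 0 1 (by norm_num) (by norm_num), d1, z 1 2 (by norm_num) (by norm_num),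
    z 1 0 (by norm_num) (by norm_num), zl 2 1 (by norm_num)] at q1
  norm_num at q1
  have b1 : cc C x1 2 = 15 := by omega
  norm_num at r1
  rw [q0, q1, b1] at r1
  -- level 2
  obtain ⟨x2, hx2⟩ := cc_pos (C := C) (x := x1) (i := 2) (by omega)
  have d2 := bt_diag_one hC hd (by norm_num) ⟨x2, hx2⟩
  obtain ⟨s2, r2⟩ := row hC hreg hx2
  norm_num at s2 r2
  have q2 := r2 0
  have q3 := r2 1
  norm_num at q2 q3
  rw [d1, d2, zl 2 1 (by norm_num), zl 3 1 (by norm_num), zl 2 0 (by norm_num)] at q2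
  rw [d2, z 1 2 (by norm_num) (by norm_num), zl 2 1 (by norm_num), zl 3 2 (by norm_num),
    z 2 3 (by norm_num) (by norm_num)] at q3
  norm_num at q2 q3
  have b2 : cc C x2 3 = 14 := by omega
  rw [q2, q3, b2] at r2
  -- level 3
  obtain ⟨x3, hx3⟩ := cc_pos (C := C) (x := x2) (i := 3) (by omega)
  have key3 : ∀ x, distToCode C x = 3 → cc C x 2 = 3 * bt C 3 3 := by
    intro x hx
    have := (row hC hreg hx).2 1
    norm_num at this
    rw [d2, zl 3 2 (by norm_num), zl 4 2 (by norm_num), zl 3 1 (by norm_num)] at this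
    omega
  obtain ⟨s3, r3⟩ := row hC hreg hx3
  norm_num at s3 r3
  have c3 := key3 x3 hx3
  have t05 := r0 4
  have t06 := r0 5
  have t13 := r1 3
  have t14 := r1 4
  have t22 := r2 2
  have t23 := r2 3
  have t32 := r3 2
  have t33 := r3 3
  norm_num at t05 t06 t13 t14 t22 t23 t32 t33
  have z04 := z 0 4 (by norm_num) (by norm_num)
  have z05 := z 0 5 (by norm_num) (by norm_num)
  have z13 := z 1 3 (by norm_num) (by norm_num)
  have z14 := z 1 4 (by norm_num) (by norm_num)
  have z23 := z 2 3 (by norm_num) (by norm_num)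
  have z32 := zl 3 2 (by norm_num)
  have z43 := zl 4 3 (by norm_num)
  have hl : bt C 3 3 = 3 ∨ bt C 3 3 = 5 := by
    omega
  have key4 : ∀ x, distToCode C x = 4 →
      cc C x 3 * bt C 3 3 = 4 * bt C 4 4 ∧ 3 * bt C 3 3 + 1 ≤ cc C x 3 ∧
      cc C x 3 + cc C x 4 + cc C x 5 = 16 := by
    intro x hx
    have h1 := row hC hreg hx
    have h2 := h1.2 2
    have h3 := h1.1
    norm_num at h2 h3
    rw [z43, zl 5 3 (by norm_num), zl 4 2 (by norm_num)] at h2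
    obtain ⟨y, hy, hle⟩ := cc_mono hC hx
    have h4 := key3 y hy
    norm_num at hle
    exact ⟨by simpa using h2, by omega, h3⟩
  rw [z23, z43, z32] at t32
  rcases hl with hl | hl
  · -- contradiction
    exfalso
    rw [hl] at t32 c3 t22
    have a3 : cc C x3 3 = 0 := by clear * - t32 c3 s3 t23 z14 z23; omega
    have b3 : cc C x3 4 = 7 := by clear * - a3 c3 s3; omega
    obtain ⟨x4, hx4⟩ := cc_pos (C := C) (x := x3) (i := 4) (by rw [b3]; norm_num)
    have h4 := key4 x4 hx4
    rw [c3, a3, b3] at t33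
    rw [hl] at h4 t33
    clear * - h4 t33 t22 z13 d2 a3
    omega
  · rw [hl] at t32 c3
    have a3 : cc C x3 3 = 0 := by clear * - t32 c3 s3; omega
    have b3 : cc C x3 4 = 1 := by clear * - a3 c3 s3; omega
    obtain ⟨x4, hx4⟩ := cc_pos (C := C) (x := x3) (i := 4) (by rw [b3]; norm_num)
    have h4 := key4 x4 hx4
    rw [hl] at h4
    have c4 : cc C x4 3 = 16 := by clear * - h4; omega
    have a4 : cc C x4 4 = 0 := by clear * - h4; omega
    have b4 : cc C x4 5 = 0 := by clear * - h4; omega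
    obtain ⟨-, r4⟩ := row hC hreg hx4
    norm_num at r4
    rw [c4, a4, b4] at r4
    rw [c3, a3, b3] at r3
    refine ⟨fun k => ?_, fun k => ?_, fun k => ?_, fun k => ?_⟩
    · simpa using r1 k
    · simpa using r2 k
    · simpa using r3 k
    · simpa using r4 k

lemma values {C : Set (Fin 16 → ZMod 2)} (hC : C.Nonempty) (hreg : IsCompletelyRegular C)
    (hd : IsMinDist C 6) (i : ℕ) : bt C 0 i =
      if i = 0 then 1 else if i = 6 then 112 else if i = 8 then 30
          else if i = 10 then 112 else if i = 16 then 1 else 0 := by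
  obtain ⟨r1, r2, r3, r4⟩ := core hC hreg hd
  obtain ⟨-, r0⟩ := row0 hC hreg hd
  have d0 := bt_diag_one hC hd (i := 0) (by norm_num) (hC.imp fun x hx => dtc_code hx)
  have z01 := bt_zero_of_add hC hd (i := 0) (k := 1) (by norm_num) (by norm_num)
  have z10 := bt_zero_of_lt (C := C) (i := 1) (k := 0) (by norm_num)
  have z20 := bt_zero_of_lt (C := C) (i := 2) (k := 0) (by norm_num)
  have z21 := bt_zero_of_lt (C := C) (i := 2) (k := 1) (by norm_num)
  have z30 := bt_zero_of_lt (C := C) (i := 3) (k := 0) (by norm_num)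
  have z31 := bt_zero_of_lt (C := C) (i := 3) (k := 1) (by norm_num)
  have z40 := bt_zero_of_lt (C := C) (i := 4) (k := 0) (by norm_num)
  have z41 := bt_zero_of_lt (C := C) (i := 4) (k := 1) (by norm_num)
  have z11 : bt C 1 1 = 1 := by
    have h := r0 0
    have h' := bt_zero_of_add hC hd (i := 0) (k := 2) (by norm_num) (by norm_num)
    norm_num at h
    omega
  obtain ⟨v0_2, v1_2, v2_2, v3_2, v4_2⟩ : bt C 0 2 = 0 ∧ bt C 1 2 = 0 ∧ bt C 2 2 = 1 ∧ bt C 3 2 = 0 ∧ bt C 4 2 = 0 := by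
    have h0 := r0 0
    have h1 := r1 0
    have h2 := r2 0
    have h3 := r3 0
    have h4 := r4 0
    norm_num at h0 h1 h2 h3 h4
    omega
  obtain ⟨v0_3, v1_3, v2_3, v3_3, v4_3⟩ : bt C 0 3 = 0 ∧ bt C 1 3 = 0 ∧ bt C 2 3 = 0 ∧ bt C 3 3 = 5 ∧ bt C 4 3 = 0 := by
    have h0 := r0 1
    have h1 := r1 1
    have h2 := r2 1
    have h3 := r3 1
    have h4 := r4 1
    norm_num at h0 h1 h2 h3 h4
    omega
  obtain ⟨v0_4, v1_4, v2_4, v3_4, v4_4⟩ : bt C 0 4 = 0 ∧ bt C 1 4 = 0 ∧ bt C 2 4 = 14 ∧ bt C 3 4 = 0 ∧ bt C 4 4 = 20 := by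
    have h0 := r0 2
    have h1 := r1 2
    have h2 := r2 2
    have h3 := r3 2
    have h4 := r4 2
    norm_num at h0 h1 h2 h3 h4
    omega
  obtain ⟨v0_5, v1_5, v2_5, v3_5, v4_5⟩ : bt C 0 5 = 0 ∧ bt C 1 5 = 42 ∧ bt C 2 5 = 0 ∧ bt C 3 5 = 33 ∧ bt C 4 5 = 0 := by
    have h0 := r0 3
    have h1 := r1 3
    have h2 := r2 3
    have h3 := r3 3
    have h4 := r4 3
    norm_num at h0 h1 h2 h3 h4
    omega
  obtain ⟨v0_6, v1_6, v2_6, v3_6, v4_6⟩ : bt C 0 6 = 112 ∧ bt C 1 6 = 0 ∧ bt C 2 6 = 63 ∧ bt C 3 6 = 0 ∧ bt C 4 6 = 48 := by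
    have h0 := r0 4
    have h1 := r1 4
    have h2 := r2 4
    have h3 := r3 4
    have h4 := r4 4
    norm_num at h0 h1 h2 h3 h4
    omega
  obtain ⟨v0_7, v1_7, v2_7, v3_7, v4_7⟩ : bt C 0 7 = 0 ∧ bt C 1 7 = 85 ∧ bt C 2 7 = 0 ∧ bt C 3 7 = 90 ∧ bt C 4 7 = 0 := by
    have h0 := r0 5
    have h1 := r1 5
    have h2 := r2 5
    have h3 := r3 5
    have h4 := r4 5
    norm_num at h0 h1 h2 h3 h4
    omega
  obtain ⟨v0_8, v1_8, v2_8, v3_8, v4_8⟩ : bt C 0 8 = 30 ∧ bt C 1 8 = 0 ∧ bt C 2 8 = 100 ∧ bt C 3 8 = 0 ∧ bt C 4 8 = 120 := by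
    have h0 := r0 6
    have h1 := r1 6
    have h2 := r2 6
    have h3 := r3 6
    have h4 := r4 6
    norm_num at h0 h1 h2 h3 h4
    omega
  obtain ⟨v0_9, v1_9, v2_9, v3_9, v4_9⟩ : bt C 0 9 = 0 ∧ bt C 1 9 = 85 ∧ bt C 2 9 = 0 ∧ bt C 3 9 = 90 ∧ bt C 4 9 = 0 := by
    have h0 := r0 7
    have h1 := r1 7
    have h2 := r2 7
    have h3 := r3 7
    have h4 := r4 7
    norm_num at h0 h1 h2 h3 h4
    omega
  obtain ⟨v0_10, v1_10, v2_10, v3_10, v4_10⟩ : bt C 0 10 = 112 ∧ bt C 1 10 = 0 ∧ bt C 2 10 = 63 ∧ bt C 3 10 = 0 ∧ bt C 4 10 = 48 := by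
    have h0 := r0 8
    have h1 := r1 8
    have h2 := r2 8
    have h3 := r3 8
    have h4 := r4 8
    norm_num at h0 h1 h2 h3 h4
    omega
  obtain ⟨v0_11, v1_11, v2_11, v3_11, v4_11⟩ : bt C 0 11 = 0 ∧ bt C 1 11 = 42 ∧ bt C 2 11 = 0 ∧ bt C 3 11 = 33 ∧ bt C 4 11 = 0 := by
    have h0 := r0 9
    have h1 := r1 9
    have h2 := r2 9
    have h3 := r3 9
    have h4 := r4 9
    norm_num at h0 h1 h2 h3 h4
    omega
  obtain ⟨v0_12, v1_12, v2_12, v3_12, v4_12⟩ : bt C 0 12 = 0 ∧ bt C 1 12 = 0 ∧ bt C 2 12 = 14 ∧ bt C 3 12 = 0 ∧ bt C 4 12 = 20 := by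
    have h0 := r0 10
    have h1 := r1 10
    have h2 := r2 10
    have h3 := r3 10
    have h4 := r4 10
    norm_num at h0 h1 h2 h3 h4
    omega
  obtain ⟨v0_13, v1_13, v2_13, v3_13, v4_13⟩ : bt C 0 13 = 0 ∧ bt C 1 13 = 0 ∧ bt C 2 13 = 0 ∧ bt C 3 13 = 5 ∧ bt C 4 13 = 0 := by
    have h0 := r0 11
    have h1 := r1 11
    have h2 := r2 11
    have h3 := r3 11
    have h4 := r4 11
    norm_num at h0 h1 h2 h3 h4
    omega
  obtain ⟨v0_14, v1_14, v2_14, v3_14, v4_14⟩ : bt C 0 14 = 0 ∧ bt C 1 14 = 0 ∧ bt C 2 14 = 1 ∧ bt C 3 14 = 0 ∧ bt C 4 14 = 0 := by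
    have h0 := r0 12
    have h1 := r1 12
    have h2 := r2 12
    have h3 := r3 12
    have h4 := r4 12
    norm_num at h0 h1 h2 h3 h4
    omega
  obtain ⟨v0_15, v1_15, v2_15, v3_15, v4_15⟩ : bt C 0 15 = 0 ∧ bt C 1 15 = 1 ∧ bt C 2 15 = 0 ∧ bt C 3 15 = 0 ∧ bt C 4 15 = 0 := by
    have h0 := r0 13
    have h1 := r1 13
    have h2 := r2 13
    have h3 := r3 13
    have h4 := r4 13
    norm_num at h0 h1 h2 h3 h4
    omega
  obtain ⟨v0_16, v1_16, v2_16, v3_16, v4_16⟩ : bt C 0 16 = 1 ∧ bt C 1 16 = 0 ∧ bt C 2 16 = 0 ∧ bt C 3 16 = 0 ∧ bt C 4 16 = 0 := by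
    have h0 := r0 14
    have h1 := r1 14
    have h2 := r2 14
    have h3 := r3 14
    have h4 := r4 14
    norm_num at h0 h1 h2 h3 h4
    omega
  by_cases hi : 17 ≤ i
  · have : bt C 0 i = 0 := by
      obtain ⟨x, hx⟩ := hC
      rw [← cnt_eq_bt hreg (dtc_code hx)]
      by_contra h0
      obtain ⟨c, hc, hdc⟩ := cnt_pos.1 (Nat.pos_of_ne_zero h0)
      have := hammingDist_le_card_fintype (x := x) (y := c)
      simp at this
      omega
    rw [this]
    repeat rw [if_neg (by omega)]
  · interval_cases i <;> simp [*]

lemma card_code {C : Set (Fin 16 → ZMod 2)} (hC : C.Nonempty) (hreg : IsCompletelyRegular C)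
    (hd : IsMinDist C 6) : C.ncard = 256 := by
  classical
  obtain ⟨x, hx⟩ := id hC
  have h1 : C.ncard = (Finset.univ.filter fun c => c ∈ C).card := by
    rw [← Set.ncard_coe_finset]; congr 1; ext; simp
  rw [h1, Finset.card_eq_sum_card_fiberwise (f := fun c => hammingDist x c) (t := Finset.range 17)]
  · have h2 : ∀ k ∈ Finset.range 17,
        ((Finset.univ.filter fun c => c ∈ C).filter fun c => hammingDist x c = k).card =
        bt C 0 k := by
      intro k _
      rw [← cnt_eq_bt hreg (dtc_code hx), Finset.filter_filter]; rfl
    rw [Finset.sum_congr rfl h2]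
    simp_rw [values hC hreg hd]
    decide
  · intro c _
    have := hammingDist_le_card_fintype (x := x) (y := c)
    simp at this ⊢
    omega

/-- A binary completely regular code of length 16 with minimum distance 6 has
distance distribution `(1,0,0,0,0,0,112,0,30,0,112,0,0,0,0,0,1)`; in particular all
distances between codewords lie in `{0, 6, 8, 10, 16}`. -/
theorem stmt_17 (C : Set (Fin 16 → ZMod 2)) (hC : C.Nonempty)
    (hreg : IsCompletelyRegular C) (hd : IsMinDist C 6) :
    (∀ i : ℕ,
      {p : (Fin 16 → ZMod 2) × (Fin 16 → ZMod 2) |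
          p.1 ∈ C ∧ p.2 ∈ C ∧ hammingDist p.1 p.2 = i}.ncard =
        if i = 0 then 256 else if i = 6 then 112 * 256 else if i = 8 then 30 * 256
          else if i = 10 then 112 * 256 else if i = 16 then 256 else 0) ∧
    ∀ α ∈ C, ∀ β ∈ C, hammingDist α β ∈ ({0, 6, 8, 10, 16} : Set ℕ) := by
  classical
  constructor
  · intro i
    have h1 : {p : (Fin 16 → ZMod 2) × (Fin 16 → ZMod 2) |
          p.1 ∈ C ∧ p.2 ∈ C ∧ hammingDist p.1 p.2 = i}.ncard =
        ((Finset.univ.filter fun c => c ∈ C).sigma fun x =>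
          Finset.univ.filter fun c => c ∈ C ∧ hammingDist x c = i).card := by
      rw [← Set.ncard_coe_finset,
        ← Set.ncard_image_of_injective _ (Equiv.sigmaEquivProd _ _).symm.injective]
      congr 1
      ext ⟨a, b⟩
      simp
    have h2 : C.ncard = (Finset.univ.filter fun c => c ∈ C).card := by
      rw [← Set.ncard_coe_finset]; congr 1; ext; simp
    rw [h1, Finset.card_sigma]
    have h3 : ∀ x ∈ Finset.univ.filter (fun c => c ∈ C),
        (Finset.univ.filter fun c => c ∈ C ∧ hammingDist x c = i).card = bt C 0 i := by
      intro x hx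
      rw [← cnt_eq_bt hreg (dtc_code (by simpa using hx))]; rfl
    rw [Finset.sum_congr rfl h3, Finset.sum_const, ← h2, card_code hC hreg hd,
      values hC hreg hd]
    split_ifs <;> rfl
  · intro a ha b hb
    have h1 : 0 < bt C 0 (hammingDist a b) := by
      rw [← cnt_eq_bt hreg (dtc_code ha), cnt_pos]
      exact ⟨b, hb, rfl⟩
    rw [values hC hreg hd] at h1
    simp only [Set.mem_insert_iff, Set.mem_singleton_iff]
    split_ifs at h1 <;> simp_all
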